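/- Let $I$ be an associative algebra (possibly without identity) over a field $k$, and let $K$ be a two-sided ideal of the unitization $k\ltimes_d I$ (with multiplication $(\alpha,x)(\beta,y)=(\alpha\beta,\alpha y+\beta x+xy)$). Then exactly one of the following holds: (a) $K=\{0\}\times L$ for some two-sided ideal $L$ of $I$; (b) $K=k\ltimes_d I$; (c) $K=\{(\alpha,-x) : x\in J,\ \varphi(x)=\alpha\}$ where $J$ is a subalgebra of $I$ and $\varphi:J\to k$ is a surjective algebra homomorphism such that $\varphi(x)=\alpha$ implies $\varphi(\alpha y-xy)=\varphi(\alpha y-yx)=0$ for all $y\in I$ (with $\alpha y-xy,\alpha y-yx\in J$). -/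

import Mathlib

/-- The multiplication of the unitization `k ⋉ I` of a nonunital algebra `I`. -/
def unitMul {k : Type*} [Field k] {I : Type*} [AddCommGroup I] [Module k I]
    (mI : I →ₗ[k] I →ₗ[k] I) (p q : k × I) : k × I :=
  (p.1 * q.1, p.1 • q.2 + q.1 • p.2 + mI p.2 q.2)

/-!
Let `1 = (1, 0)`. Case (b) means `1 ∈ K` and case (a) means that the first coordinate vanishes
on `K`. An ideal with `1 ∉ K` contains no `(α, 0)` with `α ≠ 0`, so after the swap
`(α, x) ↦ (-x, α)` it is the graph of a functional `φ` on a subspace `J` of `I`; the functional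
is nonzero, hence surjective, exactly when (a) fails. Multiplying `(φ x, -x) ∈ K` by `(0, y)` on
either side gives `φ (φ x • y - x y) = φ (φ x • y - y x) = 0`, and the case `y ∈ J` says that `φ`
is multiplicative.
-/

/-- A submodule absorbing a product `mul` on both sides. The product is a bare function, so that
the notion applies both to `I` and to its unitization. -/
def IsTwoSidedIdeal {R M : Type*} [Semiring R] [AddCommMonoid M] [Module R M]
    (mul : M → M → M) (S : Submodule R M) : Prop :=
  ∀ x ∈ S, ∀ y, mul x y ∈ S ∧ mul y x ∈ S

section NegGraph

variable {R E F : Type*} [Ring R] [AddCommGroup E] [Module R E] [AddCommGroup F] [Module R F]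

/-- The set `{(φ x, -x) : x ∈ J}` attached to a linear map `φ` on a submodule `J`: the graph of
`φ`, pulled back along `(a, x) ↦ (-x, a)`. Ideals of type (c) have this form. -/
def negGraph {J : Submodule R E} (φ : J →ₗ[R] F) : Submodule R (F × E) :=
  (LinearPMap.mk J φ).graph.comap ((-LinearMap.snd R F E).prod (LinearMap.fst R F E))

theorem mem_negGraph {J : Submodule R E} {φ : J →ₗ[R] F} {p : F × E} :
    p ∈ negGraph φ ↔ ∃ h : -p.2 ∈ J, φ ⟨-p.2, h⟩ = p.1 := by
  simp only [negGraph, Submodule.mem_comap, LinearPMap.mem_graph_iff, Subtype.exists]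
  constructor
  · rintro ⟨x, hx, rfl, h⟩
    exact ⟨hx, h⟩
  · rintro ⟨hx, h⟩
    exact ⟨_, hx, rfl, h⟩

theorem eq_negGraph_iff {J : Submodule R E} {φ : J →ₗ[R] F} {K : Submodule R (F × E)} :
    K = negGraph φ ↔ (K : Set (F × E)) = {p | ∃ h : -p.2 ∈ J, φ ⟨-p.2, h⟩ = p.1} := by
  rw [SetLike.ext'_iff]
  exact Eq.congr_right (Set.ext fun _ => mem_negGraph)

theorem mk_neg_mem_negGraph {J : Submodule R E} {φ : J →ₗ[R] F} {a : F} {x : E} :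
    (a, -x) ∈ negGraph φ ↔ ∃ h : x ∈ J, φ ⟨x, h⟩ = a := by
  simp only [mem_negGraph, neg_neg]

theorem apply_neg_mem_negGraph {J : Submodule R E} (φ : J →ₗ[R] F) (x : J) :
    (φ x, -(x : E)) ∈ negGraph φ :=
  mk_neg_mem_negGraph.2 ⟨x.2, rfl⟩

theorem mk_zero_mem_negGraph {J : Submodule R E} {φ : J →ₗ[R] F} {a : F} :
    (a, 0) ∈ negGraph φ ↔ a = 0 := by
  rw [← neg_zero, mk_neg_mem_negGraph]
  exact ⟨fun ⟨_, h⟩ => h.symm.trans φ.map_zero, fun h => ⟨J.zero_mem, φ.map_zero.trans h.symm⟩⟩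

theorem zero_mk_mem_negGraph {J : Submodule R E} {φ : J →ₗ[R] F} {x : E} :
    (0, x) ∈ negGraph φ ↔ ∃ h : x ∈ J, φ ⟨x, h⟩ = 0 := by
  rw [← neg_mem_iff, Prod.neg_mk, neg_zero, mk_neg_mem_negGraph]

theorem negGraph_le_ker_fst_iff {J : Submodule R E} {φ : J →ₗ[R] F} :
    negGraph φ ≤ LinearMap.ker (LinearMap.fst R F E) ↔ φ = 0 := by
  constructor
  · exact fun h => LinearMap.ext fun x => h (apply_neg_mem_negGraph φ x)
  · rintro rfl p hp
    obtain ⟨_, h⟩ := mem_negGraph.1 hp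
    exact h.symm

theorem exists_eq_negGraph_iff {K : Submodule R (F × E)} :
    (∃ (J : Submodule R E) (φ : J →ₗ[R] F), K = negGraph φ) ↔ ∀ a, (a, 0) ∈ K → a = 0 := by
  constructor
  · rintro ⟨J, φ, rfl⟩ a
    exact mk_zero_mem_negGraph.1
  · intro hK
    let e : (F × E) ≃ₗ[R] (E × F) :=
      LinearEquiv.prodComm R F E ≪≫ₗ (LinearEquiv.neg R).prodCongr (LinearEquiv.refl R F)
    let G : Submodule R (E × F) := K.map e.toLinearMap
    have hG : ∀ p ∈ G, p.1 = 0 → p.2 = 0 := by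
      rintro _ ⟨⟨a, x⟩, hp, rfl⟩ hx
      obtain rfl : x = 0 := neg_eq_zero.1 hx
      exact hK a hp
    refine ⟨G.toLinearPMap.domain, G.toLinearPMap.toFun, ?_⟩
    calc K = G.comap e.toLinearMap := (Submodule.comap_map_eq_of_injective e.injective K).symm
      _ = G.toLinearPMap.graph.comap e.toLinearMap := by rw [G.toLinearPMap_graph_eq hG]

theorem exists_eq_negGraph_iff_one_notMem {k E : Type*} [DivisionRing k] [AddCommGroup E]
    [Module k E] {K : Submodule k (k × E)} :
    (∃ (J : Submodule k E) (φ : J →ₗ[k] k), K = negGraph φ) ↔ (1, 0) ∉ K := by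
  rw [exists_eq_negGraph_iff]
  refine ⟨fun h h1 => one_ne_zero (h 1 h1), fun h1 a ha => by_contra fun hne => h1 ?_⟩
  simpa [hne] using K.smul_mem a⁻¹ ha

end NegGraph

section Unitization

variable {k I : Type*} [Field k] [AddCommGroup I] [Module k I] {mI : I →ₗ[k] I →ₗ[k] I}
  {K : Submodule k (k × I)}

theorem one_unitMul (p : k × I) : unitMul mI (1, 0) p = p := by
  simp [unitMul]

theorem unitMul_inr (p : k × I) (y : I) : unitMul mI p (0, y) = (0, p.1 • y + mI p.2 y) := by
  simp [unitMul]

theorem inr_unitMul (p : k × I) (y : I) : unitMul mI (0, y) p = (0, p.1 • y + mI y p.2) := by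
  simp [unitMul]

theorem IsTwoSidedIdeal.eq_top_iff_one_mem (hK : IsTwoSidedIdeal (unitMul mI) K) :
    K = ⊤ ↔ (1, 0) ∈ K := by
  refine ⟨fun h => h ▸ Submodule.mem_top, fun h1 => Submodule.eq_top_iff'.2 fun p => ?_⟩
  simpa only [one_unitMul] using (hK _ h1 p).1

theorem IsTwoSidedIdeal.comap_inr (hK : IsTwoSidedIdeal (unitMul mI) K) :
    IsTwoSidedIdeal (fun x y => mI x y) (K.comap (LinearMap.inr k k I)) := by
  intro x hx y
  simpa only [Submodule.mem_comap, LinearMap.inr_apply, unitMul_inr, inr_unitMul, zero_smul,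
    zero_add] using hK _ hx (0, y)

theorem IsTwoSidedIdeal.exists_eq_map_inr_iff (hK : IsTwoSidedIdeal (unitMul mI) K) :
    (∃ L : Submodule k I, IsTwoSidedIdeal (fun x y => mI x y) L ∧
      K = L.map (LinearMap.inr k k I)) ↔ K ≤ LinearMap.ker (LinearMap.fst k k I) := by
  rw [← LinearMap.range_inr]
  constructor
  · rintro ⟨L, -, rfl⟩
    exact LinearMap.map_le_range
  · exact fun h => ⟨_, hK.comap_inr, (Submodule.map_comap_eq_self h).symm⟩

variable (mI) in
/-- The data of case (c): a surjective algebra homomorphism `φ` from a subalgebra `J` of `I` to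
`k` such that every `x` with `φ x = 1` is a two-sided identity of `I` modulo `ker φ`, that is,
`ker φ` is a modular ideal. The last condition is stated homogeneously in `x`; as `φ` is only
defined on `J`, each equation comes with the membership that gives it a meaning. -/
def IsModularCharacter {J : Submodule k I} (φ : J →ₗ[k] k) : Prop :=
  Function.Surjective φ ∧
  (∀ x y : J, ∃ h : mI x y ∈ J, φ ⟨mI x y, h⟩ = φ x * φ y) ∧
  ∀ (x : J) (y : I),
    (∃ h : φ x • y - mI x y ∈ J, φ ⟨φ x • y - mI x y, h⟩ = 0) ∧
    ∃ h : φ x • y - mI y x ∈ J, φ ⟨φ x • y - mI y x, h⟩ = 0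

section Character

variable {J : Submodule k I} {φ : J →ₗ[k] k}

theorem IsTwoSidedIdeal.apply_smul_sub_mul_left (hφ : IsTwoSidedIdeal (unitMul mI) (negGraph φ))
    (x : J) (y : I) : ∃ h : φ x • y - mI x y ∈ J, φ ⟨φ x • y - mI x y, h⟩ = 0 := by
  have h := (hφ _ (apply_neg_mem_negGraph φ x) (0, y)).1
  rw [unitMul_inr, map_neg, LinearMap.neg_apply, ← sub_eq_add_neg] at h
  exact zero_mk_mem_negGraph.1 h

theorem IsTwoSidedIdeal.apply_smul_sub_mul_right (hφ : IsTwoSidedIdeal (unitMul mI) (negGraph φ))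
    (x : J) (y : I) : ∃ h : φ x • y - mI y x ∈ J, φ ⟨φ x • y - mI y x, h⟩ = 0 := by
  have h := (hφ _ (apply_neg_mem_negGraph φ x) (0, y)).2
  rw [inr_unitMul, map_neg, ← sub_eq_add_neg] at h
  exact zero_mk_mem_negGraph.1 h

theorem IsTwoSidedIdeal.apply_mul (hφ : IsTwoSidedIdeal (unitMul mI) (negGraph φ)) (x y : J) :
    ∃ h : mI x y ∈ J, φ ⟨mI x y, h⟩ = φ x * φ y := by
  obtain ⟨hmem, hzero⟩ := hφ.apply_smul_sub_mul_left x y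
  have hxy : mI x y ∈ J := by
    simpa only [sub_sub_cancel] using J.sub_mem (J.smul_mem (φ x) y.2) hmem
  refine ⟨hxy, (sub_eq_zero.1 ?_).symm⟩
  calc φ x * φ y - φ ⟨mI x y, hxy⟩ = φ (φ x • y - ⟨mI x y, hxy⟩) := by
        rw [map_sub, map_smul, smul_eq_mul]
    _ = 0 := hzero

theorem IsTwoSidedIdeal.isModularCharacter (hφ : IsTwoSidedIdeal (unitMul mI) (negGraph φ))
    (hsurj : Function.Surjective φ) : IsModularCharacter mI φ :=
  ⟨hsurj, hφ.apply_mul, fun x y =>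
    ⟨hφ.apply_smul_sub_mul_left x y, hφ.apply_smul_sub_mul_right x y⟩⟩

end Character

theorem IsTwoSidedIdeal.exists_isModularCharacter_iff (hK : IsTwoSidedIdeal (unitMul mI) K) :
    (∃ (J : Submodule k I) (φ : J →ₗ[k] k), IsModularCharacter mI φ ∧ K = negGraph φ) ↔
      ¬ K ≤ LinearMap.ker (LinearMap.fst k k I) ∧ (1, 0) ∉ K := by
  constructor
  · rintro ⟨J, φ, ⟨hsurj, -⟩, rfl⟩
    exact ⟨negGraph_le_ker_fst_iff.not.2 (LinearMap.surjective_iff_ne_zero.1 hsurj),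
      exists_eq_negGraph_iff_one_notMem.1 ⟨J, φ, rfl⟩⟩
  · rintro ⟨hfst, h1⟩
    obtain ⟨J, φ, rfl⟩ := exists_eq_negGraph_iff_one_notMem.2 h1
    exact ⟨J, φ, hK.isModularCharacter
      (LinearMap.surjective_iff_ne_zero.2 (negGraph_le_ker_fst_iff.not.1 hfst)), rfl⟩

end Unitization

theorem stmt7_general {k : Type*} [Field k] {I : Type*} [AddCommGroup I] [Module k I]
    (mI : I →ₗ[k] I →ₗ[k] I) (K : Submodule k (k × I)) (hK : IsTwoSidedIdeal (unitMul mI) K) :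
    let Pa : Prop := ∃ L : Submodule k I,
      IsTwoSidedIdeal (fun x y => mI x y) L ∧ K = L.map (LinearMap.inr k k I)
    let Pb : Prop := K = ⊤
    let Pc : Prop := ∃ (J : Submodule k I) (φ : J →ₗ[k] k),
      IsModularCharacter mI φ ∧ K = negGraph φ
    (Pa ∧ ¬Pb ∧ ¬Pc) ∨ (¬Pa ∧ Pb ∧ ¬Pc) ∨ (¬Pa ∧ ¬Pb ∧ Pc) := by
  intro Pa Pb Pc
  have ha : Pa ↔ K ≤ LinearMap.ker (LinearMap.fst k k I) := hK.exists_eq_map_inr_iff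
  have hb : Pb ↔ (1, 0) ∈ K := hK.eq_top_iff_one_mem
  have hc : Pc ↔ ¬ K ≤ LinearMap.ker (LinearMap.fst k k I) ∧ (1, 0) ∉ K :=
    hK.exists_isModularCharacter_iff
  have hab : K ≤ LinearMap.ker (LinearMap.fst k k I) → (1, 0) ∉ K :=
    fun hfst h1 => one_ne_zero (hfst h1)
  rw [ha, hb, hc]
  tauto

theorem stmt7 {k : Type*} [Field k] {I : Type*} [AddCommGroup I] [Module k I]
    (mI : I →ₗ[k] I →ₗ[k] I)
    (hI : ∀ x y z : I, mI (mI x y) z = mI x (mI y z))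
    -- `K` is a two-sided ideal of the unitization `k ⋉ I`
    (K : Submodule k (k × I))
    (hK : ∀ p ∈ K, ∀ q : k × I, unitMul mI p q ∈ K ∧ unitMul mI q p ∈ K) :
    -- then exactly one of the following three cases holds
    let Pa : Prop := ∃ L : Submodule k I,
      (∀ x ∈ L, ∀ y : I, mI x y ∈ L ∧ mI y x ∈ L) ∧
      K = Submodule.map (LinearMap.inr k k I) L
    let Pb : Prop := K = ⊤
    let Pc : Prop := ∃ J : Submodule k I, ∃ φ : ↥J →ₗ[k] k,
      Function.Surjective φ ∧
      -- `φ` is an algebra homomorphism (in particular `J` is a subalgebra)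
      (∀ x y : ↥J, ∃ h : mI ↑x ↑y ∈ J, φ ⟨mI ↑x ↑y, h⟩ = φ x * φ y) ∧
      -- `φ(x) = α` implies `φ(αy - xy) = φ(αy - yx) = 0` for all `y ∈ I`
      (∀ x : ↥J, ∀ y : I,
        (∃ h : φ x • y - mI ↑x y ∈ J, φ ⟨φ x • y - mI ↑x y, h⟩ = 0) ∧
        (∃ h : φ x • y - mI y ↑x ∈ J, φ ⟨φ x • y - mI y ↑x, h⟩ = 0)) ∧
      (K : Set (k × I)) = {p | ∃ h : -p.2 ∈ J, φ ⟨-p.2, h⟩ = p.1}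
    (Pa ∧ ¬Pb ∧ ¬Pc) ∨ (¬Pa ∧ Pb ∧ ¬Pc) ∨ (¬Pa ∧ ¬Pb ∧ Pc) := by
  simpa only [IsTwoSidedIdeal, IsModularCharacter, eq_negGraph_iff, and_assoc]
    using stmt7_general mI K hK
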